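/- arXiv:2308.10153 — 3 statements merged into one kernel-verified Lean document; each statement's English description precedes it below -/
import Mathlib

section
/- With the circuit-cutting setup below, the full state decomposes over the Pauli strings on the cut register as: ρ = 2^{-K} · Σ_{f : Fin K → Fin 4} ρ₁(S_f) ⊗ ρ₂(S_f), where the left-hand side is reindexed so that both sides are matrices indexed by A × (C × B). -/
open Matrix BigOperators Kronecker

/-- A register of `n` qubits: length-`n` bitstrings. -/
abbrev Reg (n : ℕ) := Fin n → Fin 2

/-- The four Pauli matrices `I, X, Y, Z` as `2 × 2` complex matrices. -/
noncomputable def pauli : Fin 4 → Matrix (Fin 2) (Fin 2) ℂ :=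
  ![!![1, 0; 0, 1], !![0, 1; 1, 0], !![0, -Complex.I; Complex.I, 0], !![1, 0; 0, -1]]

/-- The Pauli string `S_f`: the `K`-fold Kronecker product of the matrices `σ_{f k}`. -/
noncomputable def pauliString {K : ℕ} (f : Fin K → Fin 4) :
    Matrix (Reg K) (Reg K) ℂ :=
  Matrix.of fun b b' => ∏ k, pauli (f k) (b k) (b' k)

/-- The projector `|0⟩⟨0|` onto the all-zeros state of a register. -/
noncomputable def zeroProj (α : Type*) [Zero α] [DecidableEq α] : Matrix α α ℂ :=
  Matrix.of fun a a' => if a = 0 ∧ a' = 0 then 1 else 0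

/-- Upstream fragment data `ρ₁(M)`: the partial trace over the cut register `C` of
`(1_A ⊗ M) · U₁|0⟩⟨0|U₁ᴴ`. -/
noncomputable def rho1 {n₁ K : ℕ}
    (U₁ : Matrix (Reg n₁ × Reg K) (Reg n₁ × Reg K) ℂ)
    (M : Matrix (Reg K) (Reg K) ℂ) : Matrix (Reg n₁) (Reg n₁) ℂ :=
  Matrix.of fun a a' => ∑ c, ∑ c',
    M c' c * (U₁ * zeroProj (Reg n₁ × Reg K) * U₁ᴴ) (a, c) (a', c')

/-- Downstream fragment data `ρ₂(M) = U₂ (M ⊗ |0⟩⟨0|_B) U₂ᴴ`. -/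
noncomputable def rho2 {K n₂ : ℕ}
    (U₂ : Matrix (Reg K × Reg n₂) (Reg K × Reg n₂) ℂ)
    (M : Matrix (Reg K) (Reg K) ℂ) : Matrix (Reg K × Reg n₂) (Reg K × Reg n₂) ℂ :=
  U₂ * (M ⊗ₖ zeroProj (Reg n₂)) * U₂ᴴ

/-- The full state
`ρ = (1_A ⊗ U₂)(U₁ ⊗ 1_B)|0⟩⟨0|(U₁ ⊗ 1_B)ᴴ(1_A ⊗ U₂)ᴴ`, indexed by `A × (C × B)`
(with `U₁ ⊗ 1_B` reindexed along `(A × C) × B ≃ A × (C × B)`). -/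
noncomputable def fullState {n₁ K n₂ : ℕ}
    (U₁ : Matrix (Reg n₁ × Reg K) (Reg n₁ × Reg K) ℂ)
    (U₂ : Matrix (Reg K × Reg n₂) (Reg K × Reg n₂) ℂ) :
    Matrix (Reg n₁ × (Reg K × Reg n₂)) (Reg n₁ × (Reg K × Reg n₂)) ℂ :=
  let V : Matrix (Reg n₁ × (Reg K × Reg n₂)) (Reg n₁ × (Reg K × Reg n₂)) ℂ :=
    Matrix.reindex (Equiv.prodAssoc _ _ _) (Equiv.prodAssoc _ _ _)
      (U₁ ⊗ₖ (1 : Matrix (Reg n₂) (Reg n₂) ℂ))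
  ((1 : Matrix (Reg n₁) (Reg n₁) ℂ) ⊗ₖ U₂) * V *
    zeroProj (Reg n₁ × (Reg K × Reg n₂)) * Vᴴ *
    ((1 : Matrix (Reg n₁) (Reg n₁) ℂ) ⊗ₖ U₂)ᴴ

theorem pauli_sum (a b c d : Fin 2) :
    ∑ i, pauli i a b * pauli i c d = if b = c ∧ a = d then 2 else 0 := by
  fin_cases a <;> fin_cases b <;> fin_cases c <;> fin_cases d <;>
    simp [pauli, Fin.sum_univ_four] <;> norm_num

theorem pauliString_sum {K : ℕ} (a b c d : Reg K) :
    ∑ f : Fin K → Fin 4, pauliString f a b * pauliString f c d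
      = if b = c ∧ a = d then (2 : ℂ) ^ K else 0 := by
  have h : ∀ f : Fin K → Fin 4, pauliString f a b * pauliString f c d
      = ∏ k, (pauli (f k) (a k) (b k) * pauli (f k) (c k) (d k)) := by
    intro f
    simp [pauliString, Finset.prod_mul_distrib]
  simp_rw [h]
  rw [← Fintype.prod_sum (fun k i => pauli i (a k) (b k) * pauli i (c k) (d k))]
  simp_rw [pauli_sum]
  split_ifs with hh
  · obtain ⟨rfl, rfl⟩ := hh
    simp
  · have : ∃ k, ¬ (b k = c k ∧ a k = d k) := by
      by_contra hc
      push Not at hc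
      exact hh ⟨funext fun k => (hc k).1, funext fun k => (hc k).2⟩
    obtain ⟨k, hk⟩ := this
    exact Finset.prod_eq_zero (Finset.mem_univ k) (if_neg hk)

theorem mul_zeroProj_mul {α : Type*} [Fintype α] [Zero α] [DecidableEq α]
    (M : Matrix α α ℂ) (i j : α) :
    (M * zeroProj α * Mᴴ) i j = M i 0 * star (M j 0) := by
  have h : ∀ x, (M * zeroProj α) i x = if x = 0 then M i 0 else 0 := by
    intro x
    by_cases hx : x = 0 <;> simp [Matrix.mul_apply, zeroProj, hx]
  rw [Matrix.mul_apply]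
  simp [h, Matrix.conjTranspose_apply]

theorem rho2_apply {K n₂ : ℕ}
    (U₂ : Matrix (Reg K × Reg n₂) (Reg K × Reg n₂) ℂ)
    (M : Matrix (Reg K) (Reg K) ℂ) (x x' : Reg K × Reg n₂) :
    rho2 U₂ M x x' = ∑ y, ∑ y', M y y' * (U₂ x (y, 0) * star (U₂ x' (y', 0))) := by
  have h : ∀ y' b', (U₂ * (M ⊗ₖ zeroProj (Reg n₂))) x (y', b')
      = if b' = 0 then ∑ y, U₂ x (y, 0) * M y y' else 0 := by
    intro y' b'
    by_cases hb : b' = 0 <;>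
      simp [Matrix.mul_apply, zeroProj, hb, Fintype.sum_prod_type]
  rw [rho2, Matrix.mul_apply, Fintype.sum_prod_type, Finset.sum_comm' (t' := Finset.univ)
    (s' := fun _ => Finset.univ) (by simp)]
  simp only [h, ite_mul, zero_mul, Finset.sum_const_zero, Matrix.conjTranspose_apply]
  rw [Finset.sum_eq_single 0 (by intro b _ hb; simp [hb]) (by simp)]
  simp only [if_true, Finset.sum_mul]
  rw [Finset.sum_comm]
  refine Finset.sum_congr rfl fun y _ => Finset.sum_congr rfl fun y' _ => ?_
  ring

theorem fullState_apply {n₁ K n₂ : ℕ}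
    (U₁ : Matrix (Reg n₁ × Reg K) (Reg n₁ × Reg K) ℂ)
    (U₂ : Matrix (Reg K × Reg n₂) (Reg K × Reg n₂) ℂ)
    (a a' : Reg n₁) (x x' : Reg K × Reg n₂) :
    fullState U₁ U₂ (a, x) (a', x')
      = (∑ c, U₂ x (c, 0) * U₁ (a, c) 0) * star (∑ c, U₂ x' (c, 0) * U₁ (a', c) 0) := by
  have h : ∀ (V : Matrix (Reg n₁ × (Reg K × Reg n₂)) (Reg n₁ × (Reg K × Reg n₂)) ℂ),
      ((1 : Matrix (Reg n₁) (Reg n₁) ℂ) ⊗ₖ U₂) * V *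
    zeroProj (Reg n₁ × (Reg K × Reg n₂)) * Vᴴ *
    ((1 : Matrix (Reg n₁) (Reg n₁) ℂ) ⊗ₖ U₂)ᴴ =
      (((1 : Matrix (Reg n₁) (Reg n₁) ℂ) ⊗ₖ U₂) * V) *
    zeroProj (Reg n₁ × (Reg K × Reg n₂)) * (((1 : Matrix (Reg n₁) (Reg n₁) ℂ) ⊗ₖ U₂) * V)ᴴ := by
    intro V
    rw [Matrix.conjTranspose_mul]
    simp only [Matrix.mul_assoc]
  have h2 : ∀ a x, (((1 : Matrix (Reg n₁) (Reg n₁) ℂ) ⊗ₖ U₂) *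
      Matrix.reindex (Equiv.prodAssoc _ _ _) (Equiv.prodAssoc _ _ _)
      (U₁ ⊗ₖ (1 : Matrix (Reg n₂) (Reg n₂) ℂ))) (a, x) 0
      = ∑ c, U₂ x (c, 0) * U₁ (a, c) 0 := by
    intro a x
    have e : (Equiv.prodAssoc (Reg n₁) (Reg K) (Reg n₂)).symm 0 = (0, 0) := rfl
    simp only [Matrix.mul_apply, Fintype.sum_prod_type, Matrix.reindex_apply,
      Matrix.submatrix_apply, Matrix.kroneckerMap_apply, e, Equiv.prodAssoc_symm_apply,
      Matrix.one_apply]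
    rw [Finset.sum_eq_single a (by intro b _ hb; simp [hb.symm]) (by simp)]
    simp
  rw [fullState, h, mul_zeroProj_mul, h2, h2]

/-- Circuit-cutting decomposition of the full state over Pauli strings on the cut register:
`ρ = 2^{-K} ∑_f ρ₁(S_f) ⊗ ρ₂(S_f)`. -/
theorem fullState_pauli_decomposition {n₁ K n₂ : ℕ}
    (U₁ : Matrix (Reg n₁ × Reg K) (Reg n₁ × Reg K) ℂ)
    (U₂ : Matrix (Reg K × Reg n₂) (Reg K × Reg n₂) ℂ)
    (hU₁ : U₁ᴴ * U₁ = 1) (hU₁' : U₁ * U₁ᴴ = 1)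
    (hU₂ : U₂ᴴ * U₂ = 1) (hU₂' : U₂ * U₂ᴴ = 1) :
    fullState U₁ U₂ = ((2 : ℂ) ^ K)⁻¹ •
      ∑ f : Fin K → Fin 4, (rho1 U₁ (pauliString f)) ⊗ₖ (rho2 U₂ (pauliString f)) := by
  ext ⟨a, x⟩ ⟨a', x'⟩
  rw [fullState_apply]
  simp only [Matrix.smul_apply, Matrix.sum_apply, Matrix.kroneckerMap_apply, rho2_apply, rho1,
    Matrix.of_apply, mul_zeroProj_mul, smul_eq_mul]
  have key : ∀ f : Fin K → Fin 4,
      (∑ c, ∑ c', pauliString f c' c * (U₁ (a, c) 0 * star (U₁ (a', c') 0))) *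
        (∑ y, ∑ y', pauliString f y y' * (U₂ x (y, 0) * star (U₂ x' (y', 0))))
      = ∑ c, ∑ c', ∑ y, ∑ y', (pauliString f c' c * pauliString f y y') *
        ((U₁ (a, c) 0 * star (U₁ (a', c') 0)) * (U₂ x (y, 0) * star (U₂ x' (y', 0)))) := by
    intro f
    simp only [Finset.sum_mul]
    refine Finset.sum_congr rfl fun c _ => Finset.sum_congr rfl fun c' _ => ?_
    simp only [Finset.mul_sum]
    refine Finset.sum_congr rfl fun y _ => Finset.sum_congr rfl fun y' _ => ?_
    ring
  have key2 : ∑ f : Fin K → Fin 4,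
      (∑ c, ∑ c', pauliString f c' c * (U₁ (a, c) 0 * star (U₁ (a', c') 0))) *
        (∑ y, ∑ y', pauliString f y y' * (U₂ x (y, 0) * star (U₂ x' (y', 0))))
      = ∑ c, ∑ c', (2 : ℂ) ^ K *
        ((U₁ (a, c) 0 * star (U₁ (a', c') 0)) * (U₂ x (c, 0) * star (U₂ x' (c', 0)))) := by
    simp_rw [key]
    rw [Finset.sum_comm]
    refine Finset.sum_congr rfl fun c _ => ?_
    rw [Finset.sum_comm]
    refine Finset.sum_congr rfl fun c' _ => ?_
    rw [Finset.sum_comm, Finset.sum_eq_single c]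
    · rw [Finset.sum_comm, Finset.sum_eq_single c']
      · rw [← Finset.sum_mul, pauliString_sum]
        simp
      · intro y' _ hy
        rw [← Finset.sum_mul, pauliString_sum]
        simp [hy.symm]
      · simp
    · intro y _ hy
      rw [Finset.sum_comm]
      refine Finset.sum_eq_zero fun y' _ => ?_
      rw [← Finset.sum_mul, pauliString_sum]
      simp [hy.symm]
    · simp
  rw [key2]
  simp only [← Finset.mul_sum]
  rw [inv_mul_cancel_left₀ (pow_ne_zero K two_ne_zero), star_sum, Finset.sum_mul_sum]
  refine Finset.sum_congr rfl fun c _ => Finset.sum_congr rfl fun c' _ => ?_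
  rw [star_mul]
  ring
end

section
/- With the circuit-cutting setup and Pauli eigendecomposition data below, for any f : Fin K → Fin 4 and any complex matrix O₁ indexed by A, the weighted sum of upstream fragment expectations equals the expectation of a single enlarged observable on the upstream fragment: Σ_{r : Fin K → {+1,-1}} w_f(r) · tr(O₁ · ρ₁(P_f(r))) = tr((O₁ ⊗ S_f) · U₁|0⟩⟨0|U₁ᴴ). -/
open Matrix BigOperators Kronecker

/-- The weight `w_f(r) = ∏_k λ_{f k}(r k)` attached to a string of eigenvalue labels
`r : Fin K → ℤˣ` (the two-element type `{+1, -1}`). -/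
def cutWeight {K : ℕ} (lam : Fin 4 → ℤˣ → ℝ) (f : Fin K → Fin 4) (r : Fin K → ℤˣ) : ℝ :=
  ∏ k, lam (f k) (r k)

/-- The Kronecker product `P_f(r)` of the rank-one eigenprojectors `v_{f k}(r k) v_{f k}(r k)ᴴ`. -/
noncomputable def pauliProj {K : ℕ} (v : Fin 4 → ℤˣ → Fin 2 → ℂ)
    (f : Fin K → Fin 4) (r : Fin K → ℤˣ) : Matrix (Reg K) (Reg K) ℂ :=
  Matrix.of fun c c' => ∏ k, v (f k) (r k) (c k) * star (v (f k) (r k) (c' k))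

/-- The weighted sum of upstream fragment expectations collapses to the expectation of the
single enlarged observable `O₁ ⊗ S_f` in the upstream state `U₁|0⟩⟨0|U₁ᴴ`:
`∑_r w_f(r) tr(O₁ ρ₁(P_f(r))) = tr((O₁ ⊗ S_f) U₁|0⟩⟨0|U₁ᴴ)`. -/
theorem upstream_collapse {n₁ K : ℕ}
    (U₁ : Matrix (Reg n₁ × Reg K) (Reg n₁ × Reg K) ℂ)
    (hU₁ : U₁ᴴ * U₁ = 1) (hU₁' : U₁ * U₁ᴴ = 1)
    (v : Fin 4 → ℤˣ → Fin 2 → ℂ) (lam : Fin 4 → ℤˣ → ℝ)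
    (hunit : ∀ j r, ∑ i, v j r i * star (v j r i) = 1)
    (horth : ∀ j, ∑ i, v j 1 i * star (v j (-1) i) = 0)
    (hdecomp : ∀ j, pauli j =
      ∑ r : ℤˣ, (lam j r : ℂ) • Matrix.of (fun i i' => v j r i * star (v j r i')))
    (f : Fin K → Fin 4) (O₁ : Matrix (Reg n₁) (Reg n₁) ℂ) :
    ∑ r : Fin K → ℤˣ,
        ((cutWeight lam f r : ℝ) : ℂ) * Matrix.trace (O₁ * rho1 U₁ (pauliProj v f r)) =
      Matrix.trace ((O₁ ⊗ₖ pauliString f) *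
        (U₁ * zeroProj (Reg n₁ × Reg K) * U₁ᴴ)) := by
  have key : ∀ c c', pauliString f c c' =
      ∑ r : Fin K → ℤˣ, ((cutWeight lam f r : ℝ) : ℂ) * pauliProj v f r c c' := by
    intro c c'
    have h1 : ∀ k, pauli (f k) (c k) (c' k) =
        ∑ r : ℤˣ, (lam (f k) r : ℂ) * (v (f k) r (c k) * star (v (f k) r (c' k))) := by
      intro k
      rw [hdecomp (f k), Matrix.sum_apply]
      rfl
    simp only [pauliString, pauliProj, cutWeight, Matrix.of_apply, h1]
    rw [Finset.prod_univ_sum, Fintype.piFinset_univ]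
    refine Finset.sum_congr rfl fun r _ => ?_
    rw [Finset.prod_mul_distrib, Complex.ofReal_prod]
  generalize hR : U₁ * zeroProj (Reg n₁ × Reg K) * U₁ᴴ = R
  have hl : ∀ M : Matrix (Reg K) (Reg K) ℂ, Matrix.trace (O₁ * rho1 U₁ M) =
      ∑ a, ∑ c', ∑ a', ∑ c, O₁ a a' * M c' c * R (a', c) (a, c') := by
    intro M
    simp only [Matrix.trace, Matrix.diag_apply, Matrix.mul_apply (M := O₁), rho1,
      Matrix.of_apply, hR, Finset.mul_sum]
    refine Finset.sum_congr rfl fun a _ => ?_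
    simp only [← mul_assoc]
    conv_rhs => rw [Finset.sum_comm]
    refine Finset.sum_congr rfl fun a' _ => ?_
    rw [Finset.sum_comm]
  have hr : Matrix.trace ((O₁ ⊗ₖ pauliString f) * R) =
      ∑ a, ∑ c', ∑ a', ∑ c, O₁ a a' * pauliString f c' c * R (a', c) (a, c') := by
    simp only [Matrix.trace, Matrix.diag_apply, Matrix.mul_apply, Fintype.sum_prod_type,
      Matrix.kroneckerMap_apply]
  simp only [hl, hr, key, Finset.mul_sum, Finset.sum_mul]
  rw [Finset.sum_comm]
  refine Finset.sum_congr rfl fun a _ => ?_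
  rw [Finset.sum_comm]
  refine Finset.sum_congr rfl fun c' _ => ?_
  rw [Finset.sum_comm]
  refine Finset.sum_congr rfl fun a' _ => ?_
  rw [Finset.sum_comm]
  refine Finset.sum_congr rfl fun c _ => ?_
  refine Finset.sum_congr rfl fun r _ => ?_
  ring
end

section
/- With the circuit-cutting setup and Pauli eigendecomposition data below, suppose f* : Fin K → Fin 4 is a golden cutting point for the observable O₁, i.e., Σ_{r : Fin K → {+1,-1}} w_{f*}(r) · tr(O₁ · ρ₁(P_{f*}(r))) = 0. Then the f* term may be dropped from the reconstruction: tr((O₁ ⊗ O₂) · ρ) = 2^{-K} · Σ_{f ≠ f*} Σ_{r, s : Fin K → {+1,-1}} w_f(r) · w_f(s) · tr(O₁ · ρ₁(P_f(r))) · tr(O₂ · ρ₂(P_f(s))), for every complex matrix O₂ indexed by C × B. -/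
open Matrix BigOperators Kronecker

/-- The `(c, c')` block of the upstream state. -/
noncomputable def upBlock {n₁ K : ℕ}
    (U₁ : Matrix (Reg n₁ × Reg K) (Reg n₁ × Reg K) ℂ) (c c' : Reg K) :
    Matrix (Reg n₁) (Reg n₁) ℂ :=
  Matrix.of fun a a' => (U₁ * zeroProj (Reg n₁ × Reg K) * U₁ᴴ) (a, c) (a', c')

lemma rho1_eq {n₁ K : ℕ} (U₁ : Matrix (Reg n₁ × Reg K) (Reg n₁ × Reg K) ℂ)
    (M : Matrix (Reg K) (Reg K) ℂ) :
    rho1 U₁ M = ∑ c, ∑ c', M c' c • upBlock U₁ c c' := by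
  ext a a'
  simp [rho1, upBlock, Matrix.sum_apply]

lemma trace_rho1 {n₁ K : ℕ} (U₁ : Matrix (Reg n₁ × Reg K) (Reg n₁ × Reg K) ℂ)
    (O₁ : Matrix (Reg n₁) (Reg n₁) ℂ) (M : Matrix (Reg K) (Reg K) ℂ) :
    trace (O₁ * rho1 U₁ M) = ∑ c, ∑ c', M c' c * trace (O₁ * upBlock U₁ c c') := by
  simp [rho1_eq, Matrix.mul_sum, Matrix.trace_sum]

lemma trace_rho2 {K n₂ : ℕ} (U₂ : Matrix (Reg K × Reg n₂) (Reg K × Reg n₂) ℂ)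
    (O₂ : Matrix (Reg K × Reg n₂) (Reg K × Reg n₂) ℂ) (M : Matrix (Reg K) (Reg K) ℂ) :
    trace (O₂ * rho2 U₂ M) =
      ∑ c, ∑ c', M c c' * trace (O₂ * rho2 U₂ (Matrix.single c c' 1)) := by
  have h : rho2 U₂ M = ∑ c, ∑ c', M c c' • rho2 U₂ (Matrix.single c c' 1) := by
    have hk : M ⊗ₖ zeroProj (Reg n₂) =
        ∑ c, ∑ c', M c c' • (Matrix.single c c' (1 : ℂ) ⊗ₖ zeroProj (Reg n₂)) := by
      ext ⟨c, b⟩ ⟨c', b'⟩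
      simp [Matrix.sum_apply, Matrix.single_apply, ite_and]
    simp only [rho2]
    rw [hk]
    simp [Matrix.mul_sum, Matrix.sum_mul]
  rw [h]
  simp [Matrix.mul_sum, Matrix.trace_sum]

lemma zeroProj_prod {α β : Type*} [Zero α] [Zero β] [DecidableEq α] [DecidableEq β] :
    zeroProj (α × β) = zeroProj α ⊗ₖ zeroProj β := by
  ext ⟨a, b⟩ ⟨a', b'⟩
  simp only [zeroProj, Matrix.of_apply, Matrix.kroneckerMap_apply, Prod.mk_eq_zero]
  split_ifs <;> simp_all

lemma fullState_eq {n₁ K n₂ : ℕ}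
    (U₁ : Matrix (Reg n₁ × Reg K) (Reg n₁ × Reg K) ℂ)
    (U₂ : Matrix (Reg K × Reg n₂) (Reg K × Reg n₂) ℂ) :
    fullState U₁ U₂ =
      ∑ c, ∑ c', upBlock U₁ c c' ⊗ₖ rho2 U₂ (Matrix.single c c' 1) := by
  have hz : zeroProj (Reg n₁ × (Reg K × Reg n₂)) =
      Matrix.reindex (Equiv.prodAssoc _ _ _) (Equiv.prodAssoc _ _ _)
        (zeroProj (Reg n₁ × Reg K) ⊗ₖ zeroProj (Reg n₂)) := by
    rw [zeroProj_prod, zeroProj_prod, zeroProj_prod]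
    ext ⟨a, c, b⟩ ⟨a', c', b'⟩
    simp [mul_assoc]
  have hm : Matrix.reindex (Equiv.prodAssoc _ _ _) (Equiv.prodAssoc _ _ _)
        ((U₁ * zeroProj (Reg n₁ × Reg K) * U₁ᴴ) ⊗ₖ zeroProj (Reg n₂)) =
      ∑ c, ∑ c', upBlock U₁ c c' ⊗ₖ
        (Matrix.single c c' (1 : ℂ) ⊗ₖ zeroProj (Reg n₂)) := by
    ext ⟨a, c, b⟩ ⟨a', c', b'⟩
    simp [Matrix.sum_apply, Matrix.single_apply, ite_and, upBlock]
  have hV : Matrix.reindex (Equiv.prodAssoc _ _ _) (Equiv.prodAssoc _ _ _)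
        (U₁ ⊗ₖ (1 : Matrix (Reg n₂) (Reg n₂) ℂ)) *
      zeroProj (Reg n₁ × (Reg K × Reg n₂)) *
      (Matrix.reindex (Equiv.prodAssoc _ _ _) (Equiv.prodAssoc _ _ _)
        (U₁ ⊗ₖ (1 : Matrix (Reg n₂) (Reg n₂) ℂ)))ᴴ =
      ∑ c, ∑ c', upBlock U₁ c c' ⊗ₖ
        (Matrix.single c c' (1 : ℂ) ⊗ₖ zeroProj (Reg n₂)) := by
    rw [hz, ← hm, Matrix.conjTranspose_reindex]
    simp only [Matrix.reindex_apply, Matrix.submatrix_mul_equiv,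
      Matrix.conjTranspose_kronecker, ← Matrix.mul_kronecker_mul]
    simp
  unfold fullState
  simp only
  rw [Matrix.mul_assoc _ _ (zeroProj _), Matrix.mul_assoc _ (_ * zeroProj _), hV]
  simp only [Matrix.mul_sum, Matrix.sum_mul, Matrix.conjTranspose_kronecker,
    ← Matrix.mul_kronecker_mul, rho2]
  simp

lemma trace_full {n₁ K n₂ : ℕ}
    (U₁ : Matrix (Reg n₁ × Reg K) (Reg n₁ × Reg K) ℂ)
    (U₂ : Matrix (Reg K × Reg n₂) (Reg K × Reg n₂) ℂ)
    (O₁ : Matrix (Reg n₁) (Reg n₁) ℂ) (O₂ : Matrix (Reg K × Reg n₂) (Reg K × Reg n₂) ℂ) :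
    trace ((O₁ ⊗ₖ O₂) * fullState U₁ U₂) =
      ∑ c, ∑ c', trace (O₁ * upBlock U₁ c c') *
        trace (O₂ * rho2 U₂ (Matrix.single c c' 1)) := by
  rw [fullState_eq]
  simp only [Matrix.mul_sum, Matrix.trace_sum, ← Matrix.mul_kronecker_mul,
    Matrix.trace_kronecker]

lemma pauli_complete (a b c d : Fin 2) :
    ∑ j, pauli j a b * pauli j c d = if a = d ∧ b = c then 2 else 0 := by
  rw [Fin.sum_univ_four]
  fin_cases a <;> fin_cases b <;> fin_cases c <;> fin_cases d <;>
    simp [pauli] <;> norm_num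

lemma string_complete {K : ℕ} (a b c d : Reg K) :
    ∑ f : Fin K → Fin 4, pauliString f a b * pauliString f c d =
      if a = d ∧ b = c then (2 : ℂ) ^ K else 0 := by
  simp only [pauliString, Matrix.of_apply, ← Finset.prod_mul_distrib]
  rw [← Fintype.prod_sum (fun k j => pauli j (a k) (b k) * pauli j (c k) (d k))]
  simp only [pauli_complete]
  split_ifs with h
  · obtain ⟨rfl, rfl⟩ := h
    simp
  · have : ∃ k, ¬ (a k = d k ∧ b k = c k) := by
      by_contra hc
      push Not at hc
      exact h ⟨funext fun k => (hc k).1, funext fun k => (hc k).2⟩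
    obtain ⟨k, hk⟩ := this
    exact Finset.prod_eq_zero (Finset.mem_univ k) (if_neg hk)

lemma string_decomp {K : ℕ} (v : Fin 4 → ℤˣ → Fin 2 → ℂ) (lam : Fin 4 → ℤˣ → ℝ)
    (hdecomp : ∀ j, pauli j =
      ∑ r : ℤˣ, (lam j r : ℂ) • Matrix.of (fun i i' => v j r i * star (v j r i')))
    (f : Fin K → Fin 4) (c c' : Reg K) :
    ∑ r : Fin K → ℤˣ, ((cutWeight lam f r : ℝ) : ℂ) * pauliProj v f r c c' =
      pauliString f c c' := by
  have h : ∀ j i i', pauli j i i' =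
      ∑ r : ℤˣ, (lam j r : ℂ) * (v j r i * star (v j r i')) := by
    intro j i i'
    rw [hdecomp j, Matrix.sum_apply]
    simp only [Matrix.smul_apply, Matrix.of_apply, smul_eq_mul]
  simp only [pauliString, pauliProj, cutWeight, Matrix.of_apply, h, Complex.ofReal_prod,
    ← Finset.prod_mul_distrib]
  rw [← Fintype.prod_sum
    (fun k r => (lam (f k) r : ℂ) * (v (f k) r (c k) * star (v (f k) r (c' k))))]

/-- If `f*` is a golden cutting point for `O₁`, i.e.
`∑_r w_{f*}(r) tr(O₁ ρ₁(P_{f*}(r))) = 0`, then the `f*` term may be dropped from the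
reconstruction of `tr((O₁ ⊗ O₂) ρ)`, for every observable `O₂` on the downstream register. -/
theorem golden_cut_drop {n₁ K n₂ : ℕ}
    (U₁ : Matrix (Reg n₁ × Reg K) (Reg n₁ × Reg K) ℂ)
    (U₂ : Matrix (Reg K × Reg n₂) (Reg K × Reg n₂) ℂ)
    (hU₁ : U₁ᴴ * U₁ = 1) (hU₁' : U₁ * U₁ᴴ = 1)
    (hU₂ : U₂ᴴ * U₂ = 1) (hU₂' : U₂ * U₂ᴴ = 1)
    (v : Fin 4 → ℤˣ → Fin 2 → ℂ) (lam : Fin 4 → ℤˣ → ℝ)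
    (hunit : ∀ j r, ∑ i, v j r i * star (v j r i) = 1)
    (horth : ∀ j, ∑ i, v j 1 i * star (v j (-1) i) = 0)
    (hdecomp : ∀ j, pauli j =
      ∑ r : ℤˣ, (lam j r : ℂ) • Matrix.of (fun i i' => v j r i * star (v j r i')))
    (O₁ : Matrix (Reg n₁) (Reg n₁) ℂ)
    (fstar : Fin K → Fin 4)
    (hgolden : ∑ r : Fin K → ℤˣ,
      ((cutWeight lam fstar r : ℝ) : ℂ) *
        Matrix.trace (O₁ * rho1 U₁ (pauliProj v fstar r)) = 0) :
    ∀ O₂ : Matrix (Reg K × Reg n₂) (Reg K × Reg n₂) ℂ,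
      Matrix.trace ((O₁ ⊗ₖ O₂) * fullState U₁ U₂) =
        ((2 : ℂ) ^ K)⁻¹ *
          ∑ f ∈ Finset.univ.erase fstar, ∑ r : Fin K → ℤˣ, ∑ s : Fin K → ℤˣ,
            ((cutWeight lam f r * cutWeight lam f s : ℝ) : ℂ) *
              Matrix.trace (O₁ * rho1 U₁ (pauliProj v f r)) *
              Matrix.trace (O₂ * rho2 U₂ (pauliProj v f s)) := by
  intro O₂
  set G := fun c c' => trace (O₁ * upBlock U₁ c c') with hG
  set H := fun c c' => trace (O₂ * rho2 U₂ (Matrix.single c c' 1)) with hH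
  have h1 : ∀ f : Fin K → Fin 4, ∑ r : Fin K → ℤˣ, ((cutWeight lam f r : ℝ) : ℂ) *
      trace (O₁ * rho1 U₁ (pauliProj v f r)) =
      ∑ c, ∑ c', pauliString f c' c * G c c' := by
    intro f
    simp only [trace_rho1, Finset.mul_sum, ← string_decomp v lam hdecomp f, Finset.sum_mul]
    rw [Finset.sum_comm]
    refine Finset.sum_congr rfl fun c _ => ?_
    rw [Finset.sum_comm]
    simp only [hG, mul_assoc]
  have h2 : ∀ f : Fin K → Fin 4, ∑ r : Fin K → ℤˣ, ((cutWeight lam f r : ℝ) : ℂ) *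
      trace (O₂ * rho2 U₂ (pauliProj v f r)) =
      ∑ c, ∑ c', pauliString f c c' * H c c' := by
    intro f
    simp only [trace_rho2 U₂ O₂ (pauliProj v f _), Finset.mul_sum,
      ← string_decomp v lam hdecomp f, Finset.sum_mul]
    rw [Finset.sum_comm]
    refine Finset.sum_congr rfl fun c _ => ?_
    rw [Finset.sum_comm]
    simp only [hH, mul_assoc]
  have h3 : ∀ f : Fin K → Fin 4, ∑ r : Fin K → ℤˣ, ∑ s : Fin K → ℤˣ,
            ((cutWeight lam f r * cutWeight lam f s : ℝ) : ℂ) *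
              Matrix.trace (O₁ * rho1 U₁ (pauliProj v f r)) *
              Matrix.trace (O₂ * rho2 U₂ (pauliProj v f s)) =
      (∑ r : Fin K → ℤˣ, ((cutWeight lam f r : ℝ) : ℂ) *
        trace (O₁ * rho1 U₁ (pauliProj v f r))) *
      (∑ r : Fin K → ℤˣ, ((cutWeight lam f r : ℝ) : ℂ) *
        trace (O₂ * rho2 U₂ (pauliProj v f r))) := by
    intro f
    rw [Finset.sum_mul_sum]
    refine Finset.sum_congr rfl fun r _ => Finset.sum_congr rfl fun s _ => ?_
    push_cast
    ring
  simp only [h3]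
  rw [Finset.sum_erase _ (by rw [hgolden, zero_mul])]
  simp only [h1, h2]
  have h4 : ∑ f : Fin K → Fin 4, (∑ c, ∑ c', pauliString f c' c * G c c') *
      (∑ c, ∑ c', pauliString f c c' * H c c') = (2 : ℂ) ^ K * ∑ c, ∑ c', G c c' * H c c' := by
    calc _ = ∑ f : Fin K → Fin 4, ∑ c, ∑ c', ∑ d, ∑ d',
          (pauliString f c' c * pauliString f d d') * (G c c' * H d d') := by
          refine Finset.sum_congr rfl fun f _ => ?_
          simp only [Finset.sum_mul]
          refine Finset.sum_congr rfl fun c _ => Finset.sum_congr rfl fun c' _ => ?_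
          simp only [Finset.mul_sum]
          refine Finset.sum_congr rfl fun d _ => Finset.sum_congr rfl fun d' _ => ?_
          ring
      _ = ∑ c, ∑ c', ∑ d, ∑ d', ∑ f : Fin K → Fin 4,
          (pauliString f c' c * pauliString f d d') * (G c c' * H d d') := by
          rw [Finset.sum_comm]
          refine Finset.sum_congr rfl fun c _ => ?_
          rw [Finset.sum_comm]
          refine Finset.sum_congr rfl fun c' _ => ?_
          rw [Finset.sum_comm]
          refine Finset.sum_congr rfl fun d _ => ?_
          rw [Finset.sum_comm]
      _ = _ := by
          simp only [← Finset.sum_mul, string_complete, Finset.mul_sum]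
          refine Finset.sum_congr rfl fun c _ => Finset.sum_congr rfl fun c' _ => ?_
          simp only [and_comm (a := c' = _), ite_and, ite_mul, zero_mul]
          rw [Finset.sum_eq_single c]
          · simp
          · intro d _ hd
            simp [hd.symm]
          · simp
  rw [h4, trace_full, inv_mul_cancel_left₀ (pow_ne_zero K two_ne_zero)]
end
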